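/- Each double coset W_J x W_J^◇ in W is stable under the anti-involution w ↦ ◇(w)⁻¹. In particular, the unique longest element of each (W_J, W_J^◇)-double coset belongs to I_◇. -/

import Mathlib

set_option synthInstance.maxHeartbeats 1000000
set_option maxHeartbeats 2000000

open scoped Classical

noncomputable section

namespace LY

/-! ## The coefficient field `ℚ(q)` -/

/-- The field `ℚ(q)` of rational functions. -/
abbrev K : Type := RatFunc ℚ

/-- The indeterminate `q`. -/
def qK : K := RatFunc.X

/-- The inclusion `ℤ[q] → ℚ(q)`. -/
def toK (p : Polynomial ℤ) : K := algebraMap (Polynomial ℚ) K (p.map (Int.castRingHom ℚ))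

/-- Evaluation of `p ∈ ℤ[q]` at `−q`, as an element of `ℚ(q)`; i.e. `p(−q)`. -/
def atNegQ (p : Polynomial ℤ) : K := Polynomial.eval₂ (Int.castRingHom K) (-qK) p

/-- The standard basis element `T_w` (resp. `a_w`) of the function model `W → ℚ(q)`
of the Hecke algebra (resp. of the Lusztig–Vogan module `M`). -/
def TT {W : Type} (w : W) : W → K := fun y => if y = w then 1 else 0

variable {B W : Type} [Group W] {M : CoxeterMatrix B}

/-- The Bruhat order on a Coxeter group: `u ≤ v` iff `v` is obtained from `u` by successive
right multiplications by reflections, each increasing the length. -/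
def BruhatLE (cs : CoxeterSystem M W) (u v : W) : Prop :=
  Relation.ReflTransGen
    (fun a b => cs.length a < cs.length b ∧ ∃ t, cs.IsReflection t ∧ b = a * t) u v

/-- Connectedness of the Coxeter diagram of `M`. -/
def DiagramConnected (M : CoxeterMatrix B) : Prop :=
  ∀ i j : B, Relation.ReflTransGen (fun a b => a ≠ b ∧ M a b ≠ 2) i j

/-- An automorphism of `W` preserving the set `S` of simple reflections, i.e. an element
of `A = Aut(W,S)`. -/
def IsDiagAut (cs : CoxeterSystem M W) (a : MulAut W) : Prop :=
  (⇑a) '' (Set.range cs.simple) = Set.range cs.simple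

/-! ## The affine setting -/

/-- All the data and axioms describing the setting: `(W,S)` is the Coxeter group of an
untwisted connected affine Dynkin diagram (an irreducible affine Weyl group); `Λ` is the
subgroup of translations (elements with finite conjugacy class), free abelian of finite
rank and of finite index; `s₀` is a hyperspecial vertex, `J = S − {s₀}`, `W_J` is the
finite subgroup generated by `J` with longest element `w_J`; `*` is the involution of `W`
given by `w* = w_J w w_J` on `W_J` and `λ* = −(ʷᴶλ)` on `Λ`; `pr` is the projection
`W → W_J` along `Λ`; `ρ` is the conjugation action of `W` on `Λ_ℚ ≅ ℚ^rank`
(via the identification `freeIso` of `Λ` with `ℤ^rank`). -/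
structure AffineData (cs : CoxeterSystem M W) where
  finB : Finite B
  conn : DiagramConnected M
  infW : Infinite W
  /-- the subgroup `Λ` of translations -/
  Lam : Subgroup W
  hLam_mem : ∀ w : W, w ∈ Lam ↔ {x : W | IsConj w x}.Finite
  hLam_normal : Lam.Normal
  hLam_comm : ∀ a ∈ Lam, ∀ b ∈ Lam, a * b = b * a
  hLam_index : Lam.FiniteIndex
  /-- `Λ` is free abelian of finite rank -/
  rank : ℕ
  freeIso : Lam ≃* Multiplicative (Fin rank → ℤ)
  /-- the hyperspecial vertex `s₀` -/
  s0 : W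
  hs0_S : s0 ∈ Set.range cs.simple
  /-- `s₀` is hyperspecial: the projection `W → W/Λ` restricts to an isomorphism from the
  subgroup generated by `S − {s₀}` onto `W/Λ`. -/
  hs0_hyper : ∀ w : W, ∃! u : W,
    u ∈ Subgroup.closure (Set.range cs.simple \ {s0}) ∧ w * u⁻¹ ∈ Lam
  hWJ_fin : (Subgroup.closure (Set.range cs.simple \ {s0}) : Set W).Finite
  /-- the longest element `w_J` of `W_J` -/
  wJ : W
  hwJ_mem : wJ ∈ Subgroup.closure (Set.range cs.simple \ {s0})
  hwJ_max : ∀ u ∈ Subgroup.closure (Set.range cs.simple \ {s0}), cs.length u ≤ cs.length wJ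
  /-- the involution `*` of `W` -/
  st : MulAut W
  hst_inv : ∀ w : W, st (st w) = w
  hst_J : ∀ u ∈ Subgroup.closure (Set.range cs.simple \ {s0}), st u = wJ * u * wJ
  hst_Lam : ∀ l ∈ Lam, st l = (wJ * l * wJ⁻¹)⁻¹
  hst_S : ∀ s ∈ Set.range cs.simple, st s ∈ Set.range cs.simple
  /-- lower Bruhat intervals are finite -/
  hBruhat_fin : ∀ w : W, {y : W | BruhatLE cs y w}.Finite
  /-- the projection `W → W_J` along `Λ` (`w ↦ w̄`) -/
  pr : W → W
  hpr : ∀ w : W, pr w ∈ Subgroup.closure (Set.range cs.simple \ {s0}) ∧ w * (pr w)⁻¹ ∈ Lam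
  /-- the conjugation action of `W` on `Λ_ℚ ≅ ℚ^rank` -/
  rho : W → ((Fin rank → ℚ) →ₗ[ℚ] (Fin rank → ℚ))
  hrho : ∀ (w : W) (l : Lam),
    rho w (fun i => ((Multiplicative.toAdd (freeIso l)) i : ℚ)) =
      fun i => ((Multiplicative.toAdd
        (freeIso ⟨w * (l : W) * w⁻¹, hLam_normal.conj_mem _ l.2 w⟩)) i : ℚ)

namespace AffineData

variable {cs : CoxeterSystem M W} (D : AffineData cs)

/-- The set `J = S − {s₀}`. -/
def Jset : Set W := Set.range cs.simple \ {D.s0}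

/-- The finite Weyl group `W_J`. -/
def WJ : Subgroup W := Subgroup.closure D.Jset

/-- `λ ∈ Λ` is a dominant translation (`λ ∈ Λ⁺`). -/
def IsDominant (l : W) : Prop :=
  l ∈ D.Lam ∧ cs.length (l * D.wJ) = cs.length l + cs.length D.wJ

/-- The embedding `Λ → Λ_ℚ = ℚ^rank`. -/
def iota (l : D.Lam) : Fin D.rank → ℚ :=
  fun i => ((Multiplicative.toAdd (D.freeIso l)) i : ℚ)

/-- `e(A)`: the dimension of the `(−1)`-eigenspace of a linear endomorphism `A` of `Λ_ℚ`. -/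
def eNeg (f : (Fin D.rank → ℚ) →ₗ[ℚ] (Fin D.rank → ℚ)) : ℕ :=
  Module.finrank ℚ (Module.End.eigenspace (f : Module.End ℚ (Fin D.rank → ℚ)) (-1))

/-- The map `A_u : λ ↦ ᵘ(λ*) = −(ᵘʷᴶλ)` on `Λ_ℚ`, for `u ∈ W_J`. -/
def Amap (u : W) : (Fin D.rank → ℚ) →ₗ[ℚ] (Fin D.rank → ℚ) := - D.rho (u * D.wJ)

/-- The invariant `φ(w) = e(A_{w̄}) − e(A_e)` for `w ∈ I_*`. -/
def phi (w : W) : ℤ := (D.eNeg (D.Amap (D.pr w)) : ℤ) - (D.eNeg (D.Amap 1) : ℤ)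

/-- The double coset `W_J x W_J`. -/
def DCoset (x : W) : Set W := {y : W | ∃ u ∈ D.WJ, ∃ v ∈ D.WJ, y = u * x * v}

/-- The set `H = J ∩ bJb⁻¹`. -/
def Hset (b : W) : Set W := D.Jset ∩ ((fun s => b * s * b⁻¹) '' D.Jset)

/-- The set `H* ⊆ J`, image of `H` under `*`. -/
def Hstar (b : W) : Set W := (⇑D.st) '' D.Hset b

/-- The subgroup `W_{H*}` generated by `H*`. -/
def WHstar (b : W) : Subgroup W := Subgroup.closure (D.Hstar b)

/-- The reflection representation `R'` of `W_{H*}`, as a subspace of `Λ_ℚ`: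
the span of the vectors `λ − ˢλ` for `λ ∈ Λ`, `s ∈ H*`. -/
def Rprime (b : W) : Submodule ℚ (Fin D.rank → ℚ) :=
  Submodule.span ℚ
    {v : Fin D.rank → ℚ | ∃ l : D.Lam, ∃ s ∈ D.Hstar b,
      v = D.iota l - D.iota ⟨s * (l : W) * s⁻¹, D.hLam_normal.conj_mem _ l.2 s⟩}

/-- `e'(A)`: the dimension of the `(−1)`-eigenspace of an endomorphism `A` of `R'`. -/
def eNeg' {b : W} (f : ↥(D.Rprime b) →ₗ[ℚ] ↥(D.Rprime b)) : ℕ :=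
  Module.finrank ℚ (Module.End.eigenspace (f : Module.End ℚ ↥(D.Rprime b)) (-1))

/-- `φ'(z) = e'(B_z) − e'(B_e)`, where `B_u : x ↦ −u·(w_{H*}·x)` on `R'`; here
`rho'` is the conjugation action of `W_{H*}` on `R'` and `wHs` is the longest element
of `W_{H*}`. -/
def phiP {b : W} (rho' : W → (↥(D.Rprime b) →ₗ[ℚ] ↥(D.Rprime b))) (wHs z : W) : ℤ :=
  (D.eNeg' (-(rho' (z * wHs))) : ℤ) - (D.eNeg' (-(rho' wHs)) : ℤ)

/-- Membership in `A_Λ ⊆ A = Aut(W,S)`: automorphisms acting on `Λ` as conjugation by some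
element of `W_J`. -/
def InALam (a : MulAut W) : Prop :=
  IsDiagAut cs a ∧ ∃ w ∈ D.WJ, ∀ l ∈ D.Lam, a l = w * l * w⁻¹

/-- Membership in the coset `A_Λ* = {a ∘ * : a ∈ A_Λ}`. -/
def InALamStar (c : MulAut W) : Prop := ∃ a : MulAut W, D.InALam a ∧ c = a * D.st

/-- The double coset `W_J x W_J^◇`, where `W_J^◇` is the subgroup generated by
`J^◇ = S − {s₁}`. -/
def DCosetDia (s1 : W) (x : W) : Set W :=
  {y : W | ∃ u ∈ D.WJ, ∃ v ∈ Subgroup.closure (Set.range cs.simple \ {s1}), y = u * x * v}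


end AffineData

/-! ## The Hecke algebra, the Lusztig–Vogan module, and the polynomials `P`, `P^σ` -/

/-- The Hecke algebra of `(W,S)` over `ℚ(q)` (modelled on functions `W → ℚ(q)`, with basis
`TT w = T_w`), together with its bar involution, and the Kazhdan–Lusztig polynomials
`P_{y,w} ∈ ℤ[q]` characterized by their defining properties. -/
structure HeckeData (cs : CoxeterSystem M W) where
  /-- the involution `q ↦ q⁻¹` of `ℚ(q)` -/
  barK : K →+* K
  hbarK_X : barK qK = qK⁻¹
  hbarK_inv : ∀ x, barK (barK x) = x
  /-- the multiplication of the Hecke algebra -/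
  mulH : (W → K) →ₗ[K] (W → K) →ₗ[K] (W → K)
  hmul_assoc : ∀ x y z : W → K, mulH (mulH x y) z = mulH x (mulH y z)
  hmul_one : ∀ x : W → K, mulH (TT 1) x = x ∧ mulH x (TT 1) = x
  hmul_TT : ∀ u v : W, cs.length (u * v) = cs.length u + cs.length v →
    mulH (TT u) (TT v) = TT (u * v)
  hmul_Ts : ∀ s ∈ Set.range cs.simple,
    mulH (TT s) (TT s) = (qK - 1) • TT s + qK • TT (1 : W)
  /-- the bar involution of the Hecke algebra: the ring involution with `q ↦ q⁻¹`,
  `T_w ↦ (T_{w⁻¹})⁻¹` -/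
  barH : (W → K) →+ (W → K)
  hbarH_inv : ∀ x, barH (barH x) = x
  hbarH_smul : ∀ (c : K) (x : W → K), barH (c • x) = barK c • barH x
  hbarH_mul : ∀ x y : W → K, barH (mulH x y) = mulH (barH x) (barH y)
  hbarH_T : ∀ w : W, mulH (barH (TT w)) (TT w⁻¹) = TT (1 : W) ∧
    mulH (TT w⁻¹) (barH (TT w)) = TT (1 : W)
  /-- the Kazhdan–Lusztig polynomials `P_{y,w}` -/
  P : W → W → Polynomial ℤ
  hP_supp : ∀ y w : W, ¬ BruhatLE cs y w → P y w = 0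
  hP_diag : ∀ w : W, P w w = 1
  hP_deg : ∀ y w : W, BruhatLE cs y w → y ≠ w →
    2 * (P y w).natDegree + 1 ≤ cs.length w - cs.length y
  hP_dual : ∀ w : W,
    (qK ^ cs.length w) • barH (fun y => if BruhatLE cs y w then toK (P y w) else 0)
      = fun y => if BruhatLE cs y w then toK (P y w) else 0

/-- The Lusztig–Vogan module `M` over the Hecke algebra `H'` with parameter `q²`, attached to
a length-preserving involutive automorphism `star` of `(W,S)`, together with its bar
involution, and the polynomials `P^σ_{y,w} ∈ ℤ[q]` (for `y, w ∈ I_*`) characterized by their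
defining properties.  Both `H'` and `M` are modelled on functions `W → ℚ(q)`; the basis
element `a_w` of `M` (for `w ∈ I_*`) is `TT w`. -/
structure LVData (cs : CoxeterSystem M W) (star : MulAut W) where
  /-- the involution `q ↦ q⁻¹` of `ℚ(q)` -/
  barK : K →+* K
  hbarK_X : barK qK = qK⁻¹
  hbarK_inv : ∀ x, barK (barK x) = x
  /-- the multiplication of the Hecke algebra `H'` with parameter `q²` -/
  mulH' : (W → K) →ₗ[K] (W → K) →ₗ[K] (W → K)
  hmul'_assoc : ∀ x y z : W → K, mulH' (mulH' x y) z = mulH' x (mulH' y z)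
  hmul'_one : ∀ x : W → K, mulH' (TT 1) x = x ∧ mulH' x (TT 1) = x
  hmul'_TT : ∀ u v : W, cs.length (u * v) = cs.length u + cs.length v →
    mulH' (TT u) (TT v) = TT (u * v)
  hmul'_Ts : ∀ s ∈ Set.range cs.simple,
    mulH' (TT s) (TT s) = (qK ^ 2 - 1) • TT s + (qK ^ 2) • TT (1 : W)
  /-- the bar involution of `H'` -/
  barH' : (W → K) →+ (W → K)
  hbarH'_inv : ∀ x, barH' (barH' x) = x
  hbarH'_smul : ∀ (c : K) (x : W → K), barH' (c • x) = barK c • barH' x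
  hbarH'_mul : ∀ x y : W → K, barH' (mulH' x y) = mulH' (barH' x) (barH' y)
  hbarH'_T : ∀ w : W, mulH' (barH' (TT w)) (TT w⁻¹) = TT (1 : W) ∧
    mulH' (TT w⁻¹) (barH' (TT w)) = TT (1 : W)
  /-- the action of `H'` on the module `M` -/
  actM : (W → K) →ₗ[K] (W → K) →ₗ[K] (W → K)
  hact_one : ∀ m : W → K, actM (TT 1) m = m
  hact_mul : ∀ (h h' : W → K) (m : W → K), actM (mulH' h h') m = actM h (actM h' m)
  hact1 : ∀ s ∈ Set.range cs.simple, ∀ w : W, star w = w⁻¹ →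
    s * w = w * star s → cs.length w < cs.length (s * w) →
    actM (TT s) (TT w) = qK • TT w + (qK + 1) • TT (s * w)
  hact2 : ∀ s ∈ Set.range cs.simple, ∀ w : W, star w = w⁻¹ →
    s * w = w * star s → cs.length (s * w) < cs.length w →
    actM (TT s) (TT w) = (qK ^ 2 - qK - 1) • TT w + (qK ^ 2 - qK) • TT (s * w)
  hact3 : ∀ s ∈ Set.range cs.simple, ∀ w : W, star w = w⁻¹ →
    s * w ≠ w * star s → cs.length w < cs.length (s * w) →
    actM (TT s) (TT w) = TT (s * w * star s)
  hact4 : ∀ s ∈ Set.range cs.simple, ∀ w : W, star w = w⁻¹ →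
    s * w ≠ w * star s → cs.length (s * w) < cs.length w →
    actM (TT s) (TT w) = (qK ^ 2 - 1) • TT w + (qK ^ 2) • TT (s * w * star s)
  /-- the bar involution of the module `M` -/
  barM : (W → K) →+ (W → K)
  hbarM_inv : ∀ m : W → K, barM (barM m) = m
  hbarM_smul : ∀ (c : K) (m : W → K), barM (c • m) = barK c • barM m
  hbarM_act : ∀ (h m : W → K), barM (actM h m) = actM (barH' h) (barM m)
  hbarM_one : barM (TT 1) = TT (1 : W)
  /-- the Lusztig–Vogan polynomials `P^σ_{y,w}` -/
  Psig : W → W → Polynomial ℤ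
  hPsig_supp : ∀ y w : W, ¬ (BruhatLE cs y w ∧ star y = y⁻¹) → Psig y w = 0
  hPsig_diag : ∀ w : W, star w = w⁻¹ → Psig w w = 1
  hPsig_deg : ∀ y w : W, star w = w⁻¹ → star y = y⁻¹ → BruhatLE cs y w → y ≠ w →
    2 * (Psig y w).natDegree + 1 ≤ cs.length w - cs.length y
  hPsig_dual : ∀ w : W, star w = w⁻¹ →
    (qK ^ (2 * cs.length w)) •
        barM (fun y => if BruhatLE cs y w ∧ star y = y⁻¹ then toK (Psig y w) else 0)
      = fun y => if BruhatLE cs y w ∧ star y = y⁻¹ then toK (Psig y w) else 0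

/-! ## The `Z`-polynomials -/

/-- `Z_w(q) = Σ_{y ≤ w} P_{y,w}(q) q^{ℓ(y)}`. -/
def Zpoly (cs : CoxeterSystem M W) (HD : HeckeData cs) (w : W) : K :=
  ∑ᶠ y : W, if BruhatLE cs y w then toK (HD.P y w) * qK ^ cs.length y else 0

/-- `Z_w(−q) = Σ_{y ≤ w} P_{y,w}(−q) (−q)^{ℓ(y)}`. -/
def ZpolyNeg (cs : CoxeterSystem M W) (HD : HeckeData cs) (w : W) : K :=
  ∑ᶠ y : W, if BruhatLE cs y w then atNegQ (HD.P y w) * (-qK) ^ cs.length y else 0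

/-- `Z^σ_w(q) = Σ_{y ≤ w, y ∈ I_*} P^σ_{y,w}(q) q^{ℓ(y)} ((q−1)/(q+1))^{φ(y)}`. -/
def Zsig (cs : CoxeterSystem M W) (D : AffineData cs) (LD : LVData cs D.st) (w : W) : K :=
  ∑ᶠ y : W, if BruhatLE cs y w ∧ D.st y = y⁻¹ then
    toK (LD.Psig y w) * qK ^ cs.length y * ((qK - 1) / (qK + 1)) ^ D.phi y else 0
/-! ## The reflection cocycle of a Coxeter system -/

section Cocycle

variable (cs : CoxeterSystem M W)

/-- The action of a simple reflection on signed elements. -/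
def sigAct (i : B) : Function.End (W × ZMod 2) :=
  fun p => (cs.simple i * p.1 * cs.simple i, p.2 + if p.1 = cs.simple i then 1 else 0)

theorem end_mul_apply {X : Type} (f g : Function.End X) (x : X) : (f * g) x = f (g x) := rfl

theorem end_one_apply {X : Type} (x : X) : (1 : Function.End X) x = x := rfl

theorem conj_eq_iff_aux {G : Type} [Group G] (x t c : G) :
    x * t * x⁻¹ = c ↔ t = x⁻¹ * c * x := by
  constructor
  · rintro rfl; group
  · rintro rfl; group

theorem simple_braid_aux (i j : B) (n : ℕ) : cs.simple j * (cs.simple i * cs.simple j) ^ n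
    = (cs.simple j * cs.simple i) ^ n * cs.simple j := by
  induction n with
  | zero => simp
  | succ n ih =>
    rw [pow_succ, pow_succ, ← mul_assoc, ih]
    simp only [mul_assoc]

theorem sigAct_pow (i j : B) (n : ℕ) (t : W) (e : ZMod 2) :
    ((sigAct cs i * sigAct cs j) ^ n) (t, e) =
      ((cs.simple i * cs.simple j) ^ n * t * ((cs.simple i * cs.simple j) ^ n)⁻¹,
        e + ∑ k ∈ Finset.range (2 * n),
          if t = (cs.simple j * cs.simple i) ^ k * cs.simple j then 1 else 0) := by
  induction n with
  | zero => simp [end_one_apply]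
  | succ n ih =>
    rw [pow_succ', end_mul_apply, ih, end_mul_apply]
    have hinv : ((cs.simple i * cs.simple j) ^ n)⁻¹ = (cs.simple j * cs.simple i) ^ n := by
      rw [← inv_pow]; simp
    have hc := simple_braid_aux cs i j n
    have h1 : ((cs.simple i * cs.simple j) ^ n * t * ((cs.simple i * cs.simple j) ^ n)⁻¹
        = cs.simple j) ↔ t = (cs.simple j * cs.simple i) ^ (2 * n) * cs.simple j := by
      rw [conj_eq_iff_aux, hinv, mul_assoc, hc, ← mul_assoc, ← pow_add, two_mul]
    have h2 : (cs.simple j * ((cs.simple i * cs.simple j) ^ n * t *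
        ((cs.simple i * cs.simple j) ^ n)⁻¹) * cs.simple j
        = cs.simple i) ↔ t = (cs.simple j * cs.simple i) ^ (2 * n + 1) * cs.simple j := by
      have h3 := conj_eq_iff_aux (cs.simple j) ((cs.simple i * cs.simple j) ^ n * t *
        ((cs.simple i * cs.simple j) ^ n)⁻¹) (cs.simple i)
      rw [cs.inv_simple] at h3
      rw [h3, conj_eq_iff_aux, hinv, mul_assoc, mul_assoc, hc, ← mul_assoc, ← mul_assoc,
        ← pow_succ, ← pow_add,
        show n + 1 + n = 2 * n + 1 by ring]
    simp only [sigAct, h1, h2]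
    rw [show 2 * (n + 1) = 2 * n + 1 + 1 by ring, Finset.sum_range_succ, Finset.sum_range_succ]
    refine Prod.ext ?_ ?_
    · simp only [pow_succ']
      simp [mul_assoc]
    · simp only [add_assoc]

theorem sigAct_liftable : M.IsLiftable (sigAct cs) := by
  intro i j
  funext p
  obtain ⟨t, e⟩ := p
  rw [sigAct_pow]
  have h := cs.simple_mul_simple_pow i j
  have h' := cs.simple_mul_simple_pow' i j
  rw [h, two_mul, Finset.sum_range_add]
  simp only [pow_add, h', one_mul]
  refine Prod.ext (by simp; rfl) ?_
  simp only [CharTwo.add_self_eq_zero, add_zero]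
  rfl

/-- The action of `W` on signed elements. -/
def sigHom : W →* Function.End (W × ZMod 2) := cs.lift ⟨sigAct cs, sigAct_liftable cs⟩

/-- The left reflection cocycle. -/
def eta (t x : W) : ZMod 2 := (sigHom cs x⁻¹ (t, 0)).2

theorem sigHom_simple (i : B) : sigHom cs (cs.simple i) = sigAct cs i :=
  cs.lift_apply_simple (sigAct_liftable cs) i

theorem sigHom_apply (x t : W) (e : ZMod 2) :
    sigHom cs x (t, e) = (x * t * x⁻¹, e + eta cs t x⁻¹) := by
  unfold eta
  rw [inv_inv]
  induction x using cs.simple_induction_left generalizing t e with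
  | one => simp [end_one_apply]
  | mul_simple_left w i ih =>
    rw [map_mul, end_mul_apply, end_mul_apply, ih, ih t 0, sigHom_simple]
    simp [sigAct, mul_assoc, add_assoc]

theorem eta_mul (t x y : W) : eta cs t (x * y) = eta cs t x + eta cs (x⁻¹ * t * x) y := by
  have h : sigHom cs (y⁻¹ * x⁻¹) (t, 0) = sigHom cs y⁻¹ (sigHom cs x⁻¹ (t, 0)) := by
    rw [map_mul]; rfl
  rw [sigHom_apply, sigHom_apply cs x⁻¹, sigHom_apply] at h
  simpa using congrArg Prod.snd h

theorem eta_one (t : W) : eta cs t 1 = 0 := by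
  simp [eta, end_one_apply]

theorem eta_simple (t : W) (i : B) :
    eta cs t (cs.simple i) = if t = cs.simple i then 1 else 0 := by
  simp [eta, sigHom_simple, sigAct]

theorem eta_inv (t x : W) : eta cs t x⁻¹ = eta cs (x * t * x⁻¹) x := by
  have h := eta_mul cs t x⁻¹ x
  rw [inv_mul_cancel, eta_one, inv_inv] at h
  exact CharTwo.add_eq_zero.1 h.symm

theorem eta_self {t : W} (ht : cs.IsReflection t) : eta cs t t = 1 := by
  obtain ⟨w, i, rfl⟩ := ht
  rw [eta_mul, eta_mul, eta_inv, eta_simple]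
  simp only [mul_assoc, inv_mul_cancel_left, inv_mul_cancel, mul_one, mul_inv_rev, if_true]
  rw [add_right_comm, CharTwo.add_self_eq_zero, zero_add]

/-- If the cocycle is nonzero, `t` occurs in the inversion sequence of any word. -/
theorem mem_lis_of_eta (ω : List B) (t : W) (h : eta cs t (cs.wordProd ω) = 1) :
    t ∈ cs.leftInvSeq ω := by
  induction ω generalizing t with
  | nil => simp [eta_one] at h
  | cons i ω ih =>
    rw [cs.wordProd_cons, eta_mul, eta_simple] at h
    rw [CoxeterSystem.leftInvSeq, List.mem_cons]
    by_cases hti : t = cs.simple i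
    · exact Or.inl hti
    · right
      rw [if_neg hti, zero_add] at h
      refine List.mem_map.2 ⟨_, ih _ h, ?_⟩
      simp [mul_assoc]

theorem zmod_two (a : ZMod 2) : a = 0 ∨ a = 1 := by
  revert a; decide

theorem len_lt_of_eta {t x : W} (h : eta cs t x = 1) : cs.length (t * x) < cs.length x := by
  obtain ⟨ω, hω, rfl⟩ := cs.exists_isReduced x
  exact (cs.isLeftInversion_of_mem_leftInvSeq hω (mem_lis_of_eta cs ω t h)).2

theorem eta_eq_one_iff {t : W} (ht : cs.IsReflection t) (x : W) :
    eta cs t x = 1 ↔ cs.length (t * x) < cs.length x := by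
  refine ⟨len_lt_of_eta cs, fun h => ?_⟩
  rcases zmod_two (eta cs t x) with h0 | h1
  · exfalso
    have h2 : eta cs t (t * x) = 1 := by
      rw [eta_mul, eta_self cs ht, ht.inv, mul_assoc, ht.mul_self, mul_one, h0, add_zero]
    have h3 := len_lt_of_eta cs h2
    rw [← mul_assoc, ht.mul_self, one_mul] at h3
    omega
  · exact h1

/-- A subgroup containing the inversions of all of its elements. -/
def InvClosed (H : Subgroup W) : Prop := ∀ x ∈ H, ∀ t, eta cs t x = 1 → t ∈ H

theorem invClosed_closure (I : Set W) (hI : I ⊆ Set.range cs.simple) :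
    InvClosed cs (Subgroup.closure I) := by
  intro x hx
  induction hx using Subgroup.closure_induction with
  | mem x hx =>
    intro t h
    obtain ⟨i, rfl⟩ := hI hx
    rw [eta_simple] at h
    by_cases hti : t = cs.simple i
    · rw [hti]; exact Subgroup.subset_closure hx
    · rw [if_neg hti] at h; exact absurd h (by decide)
  | one => intro t h; rw [eta_one] at h; exact absurd h (by decide)
  | mul x y hx hy ihx ihy =>
    intro t h
    rw [eta_mul] at h
    rcases zmod_two (eta cs t x) with h0 | h1
    · rw [h0, zero_add] at h
      have := ihy _ h
      have h2 := mul_mem (mul_mem hx this) (inv_mem hx)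
      simpa [mul_assoc] using h2
    · exact ihx _ h1
  | inv x hx ih =>
    intro t h
    rw [eta_inv] at h
    have h2 := mul_mem (mul_mem (inv_mem hx) (ih _ h)) hx
    simpa [mul_assoc] using h2

/-- An element all of whose inversions lie in `H` lies in `H`. -/
theorem mem_of_inversions (H : Subgroup W) (x : W)
    (h : ∀ t, cs.IsReflection t → eta cs t x = 1 → t ∈ H) : x ∈ H := by
  obtain ⟨ω, hω, rfl⟩ := cs.exists_isReduced x
  rw [← inv_mem_iff, ← cs.prod_leftInvSeq]
  refine Subgroup.list_prod_mem H fun t ht => ?_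
  have h1 := cs.isLeftInversion_of_mem_leftInvSeq hω ht
  exact h t h1.1 ((eta_eq_one_iff cs h1.1 _).2 h1.2)

theorem len_left {H : Subgroup W} (hH : InvClosed cs H) (d : W)
    (hd : ∀ i, cs.simple i ∈ H → cs.length (cs.simple i * d) < cs.length d) :
    ∀ n : ℕ, ∀ u ∈ H, cs.length u = n → cs.length (u * d) + cs.length u = cs.length d := by
  intro n
  induction n with
  | zero =>
    intro u _ hn
    rw [cs.length_eq_zero_iff] at hn
    simp [hn]
  | succ n ih =>
    intro u hu hn
    have hne : u ≠ 1 := by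
      rintro rfl
      simp at hn
    obtain ⟨i, hi⟩ := cs.exists_rightDescent_of_ne_one hne
    have hi' := (cs.isRightDescent_iff).1 hi
    have hlt : cs.length (cs.simple i * u⁻¹) < cs.length u⁻¹ := by
      have : cs.simple i * u⁻¹ = (u * cs.simple i)⁻¹ := by simp
      rw [this, cs.length_inv, cs.length_inv]
      exact hi
    have hsi : cs.simple i ∈ H := hH u⁻¹ (inv_mem hu) _
      ((eta_eq_one_iff cs (cs.isReflection_simple i) _).2 hlt)
    have hih := ih (u * cs.simple i) (mul_mem hu hsi) (by omega)
    have e1 : eta cs (cs.simple i) d = 1 :=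
      (eta_eq_one_iff cs (cs.isReflection_simple i) _).2 (hd i hsi)
    have e0 : eta cs (cs.simple i) (u * cs.simple i)⁻¹ = 0 := by
      rcases zmod_two (eta cs (cs.simple i) (u * cs.simple i)⁻¹) with h | h
      · exact h
      · have := len_lt_of_eta cs h
        have h3 : cs.simple i * (u * cs.simple i)⁻¹ = u⁻¹ := by simp
        rw [h3, cs.length_inv, cs.length_inv] at this
        omega
    have hdd : d = (u * cs.simple i)⁻¹ * (u * cs.simple i * d) := by group
    rw [hdd, eta_mul, e0, zero_add] at e1
    have h4 := len_lt_of_eta cs e1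
    have h5 : (u * cs.simple i)⁻¹⁻¹ * cs.simple i * (u * cs.simple i)⁻¹ * (u * cs.simple i * d)
        = u * d := by simp [mul_assoc]
    rw [h5] at h4
    have h6 := cs.length_le_length_mul_add_left u d
    omega

theorem dcoset_form {H H' : Subgroup W} (hH : InvClosed cs H) (hH' : InvClosed cs H') (d : W)
    (hd : ∀ i, cs.simple i ∈ H → cs.length (cs.simple i * d) < cs.length d)
    (hd' : ∀ i, cs.simple i ∈ H' → cs.length (d * cs.simple i) < cs.length d) :
    ∀ n : ℕ, ∀ u ∈ H, ∀ v ∈ H', cs.length u = n → ∃ u' ∈ H, ∃ v' ∈ H',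
      u * d * v = u' * d * v' ∧
        cs.length (u * d * v) + cs.length u' + cs.length v' = cs.length d := by
  intro n
  induction n with
  | zero =>
    intro u _ v hv hn
    rw [cs.length_eq_zero_iff] at hn
    subst hn
    refine ⟨1, one_mem _, v, hv, rfl, ?_⟩
    have h := len_left cs hH' d⁻¹ (fun i hi => by
      have h1 : cs.simple i * d⁻¹ = (d * cs.simple i)⁻¹ := by simp
      rw [h1, cs.length_inv, cs.length_inv]
      exact hd' i hi) _ v⁻¹ (inv_mem hv) rfl
    have h1 : v⁻¹ * d⁻¹ = (d * v)⁻¹ := by simp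
    rw [h1, cs.length_inv, cs.length_inv, cs.length_inv] at h
    simpa using h
  | succ n ih =>
    intro u0 hu0 v0 hv0 hn
    have hne : u0 ≠ 1 := by
      rintro rfl
      simp at hn
    obtain ⟨i, hi⟩ := cs.exists_leftDescent_of_ne_one hne
    have hi' := (cs.isLeftDescent_iff).1 hi
    have hsi : cs.simple i ∈ H := hH u0 hu0 _
      ((eta_eq_one_iff cs (cs.isReflection_simple i) _).2 hi)
    obtain ⟨u, hu, v, hv, hy, hl⟩ := ih (cs.simple i * u0) (mul_mem hsi hu0) v0 hv0 (by omega)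
    have hu0y : u0 * d * v0 = cs.simple i * (u * d * v) := by
      rw [← hy]; simp [mul_assoc]
    rw [hy] at hl
    rw [hu0y]
    have tri : ∀ a b : W, cs.length d ≤ cs.length (a * d * b) + cs.length a + cs.length b := by
      intro a b
      have h1 := cs.length_le_length_mul_add_left a d
      have h2 := cs.length_le_length_mul_add_right (a * d) b
      omega
    have hs1 : cs.simple i * (u * d * v) = cs.simple i * u * d * v := by group
    have t1 := tri (cs.simple i * u) v
    rw [← hs1] at t1
    rcases cs.length_simple_mul u i with hsu | hsu
    · rcases cs.length_simple_mul (u * d * v) i with hsy | hsy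
      · have a1 := len_left cs hH d hd _ u hu rfl
        have a2 := len_left cs hH d hd _ _ (mul_mem hsi hu) rfl
        rw [mul_assoc] at a2
        have e1 : eta cs (cs.simple i) (u * d) = 1 :=
          (eta_eq_one_iff cs (cs.isReflection_simple i) _).2 (by omega)
        have e0 : eta cs (cs.simple i) (u * d * v) = 0 := by
          rcases zmod_two (eta cs (cs.simple i) (u * d * v)) with h | h
          · exact h
          · have := len_lt_of_eta cs h
            omega
        have hud : u * d = u * d * v * v⁻¹ := by group
        rw [hud, eta_mul, e0, zero_add] at e1
        have hr := hH' _ (inv_mem hv) _ e1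
        have hlr := len_lt_of_eta cs e1
        set r := (u * d * v)⁻¹ * cs.simple i * (u * d * v) with hrdef
        have hrr : (r * v⁻¹)⁻¹ = v * r := by
          have : r⁻¹ = r := by simp [hrdef, mul_assoc]
          rw [mul_inv_rev, inv_inv, this]
        rw [← cs.length_inv, hrr, cs.length_inv] at hlr
        have hsyr : cs.simple i * (u * d * v) = u * d * (v * r) := by
          simp [hrdef, mul_assoc]
        refine ⟨u, hu, v * r, mul_mem hv hr, hsyr, ?_⟩
        have t2 := tri u (v * r)
        rw [← hsyr] at t2
        omega
      · exact ⟨cs.simple i * u, mul_mem hsi hu, v, hv, hs1, by omega⟩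
    · refine ⟨cs.simple i * u, mul_mem hsi hu, v, hv, hs1, ?_⟩
      rcases cs.length_simple_mul (u * d * v) i with hsy | hsy <;> omega

/-- Uniqueness of the longest element of a double coset. -/
theorem dcoset_max_unique {H H' : Subgroup W} (hH : InvClosed cs H) (hH' : InvClosed cs H') (d : W)
    (hmax : ∀ u ∈ H, ∀ v ∈ H', cs.length (u * d * v) ≤ cs.length d)
    (u v : W) (hu : u ∈ H) (hv : v ∈ H') (hlen : cs.length (u * d * v) = cs.length d) :
    u * d * v = d := by
  obtain ⟨u', _, v', _, h1, h2⟩ := dcoset_form cs hH hH' d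
    (fun i hi => by
      have := hmax _ hi 1 (one_mem _)
      rw [mul_one] at this
      exact lt_of_le_of_ne this (cs.length_simple_mul_ne d i))
    (fun i hi => by
      have := hmax 1 (one_mem _) _ hi
      rw [one_mul] at this
      exact lt_of_le_of_ne this (cs.length_mul_simple_ne d i)) _ u hu v hv rfl
  have hu' : cs.length u' = 0 := by omega
  have hv' : cs.length v' = 0 := by omega
  rw [cs.length_eq_zero_iff] at hu' hv'
  rw [h1, hu', hv']
  simp

theorem len_aut_le (f : MulAut W) (hf : ∀ i, f (cs.simple i) ∈ Set.range cs.simple) (x : W) :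
    cs.length (f x) ≤ cs.length x := by
  obtain ⟨ω, hω, rfl⟩ := cs.exists_isReduced x
  rw [hω.eq]
  clear hω
  induction ω with
  | nil => simp
  | cons i ω ih =>
    rw [cs.wordProd_cons, map_mul]
    obtain ⟨j, hj⟩ := hf i
    have h1 := cs.length_mul_le (f (cs.simple i)) (f (cs.wordProd ω))
    rw [← hj, cs.length_simple] at h1
    rw [← hj, List.length_cons]
    omega

theorem eta_aut (f : MulAut W) (hl : ∀ x, cs.length (f x) = cs.length x) {t : W}
    (ht : cs.IsReflection t) (ht' : cs.IsReflection (f t)) (x : W) :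
    eta cs (f t) (f x) = eta cs t x := by
  have h : eta cs (f t) (f x) = 1 ↔ eta cs t x = 1 := by
    rw [eta_eq_one_iff cs ht, eta_eq_one_iff cs ht', ← map_mul, hl, hl]
  rcases zmod_two (eta cs (f t) (f x)) with h1 | h1 <;>
    rcases zmod_two (eta cs t x) with h2 | h2 <;> simp_all

end Cocycle

section Main

variable {cs : CoxeterSystem M W} (D : AffineData cs)

/-- The centralizer of `Λ` is contained in `Λ`. -/
theorem mem_Lam_of_comm (w : W) (h : ∀ l ∈ D.Lam, w * l * w⁻¹ = l) : w ∈ D.Lam := by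
  rw [D.hLam_mem]
  have hfi := D.hLam_index
  have hle : D.Lam ≤ Subgroup.centralizer {w} := by
    intro l hl
    rw [Subgroup.mem_centralizer_singleton_iff]
    have := h l hl
    exact (mul_inv_eq_iff_eq_mul.1 this).symm
  have hfi2 : (Subgroup.centralizer {w}).FiniteIndex := Subgroup.finiteIndex_of_le hle
  have hfin : Finite (W ⧸ Subgroup.centralizer {w}) := inferInstance
  have hsub : {x : W | IsConj w x} ⊆
      Set.range (fun q : W ⧸ Subgroup.centralizer {w} => q.out * w * q.out⁻¹) := by
    rintro x hx
    obtain ⟨c, rfl⟩ := isConj_iff.1 hx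
    refine ⟨(c : W ⧸ Subgroup.centralizer {w}), ?_⟩
    obtain ⟨z, hz⟩ := QuotientGroup.mk_out_eq_mul (Subgroup.centralizer {w}) c
    have hz2 := Subgroup.mem_centralizer_singleton_iff.1 z.2
    show (c : W ⧸ Subgroup.centralizer {w}).out * w *
      (c : W ⧸ Subgroup.centralizer {w}).out⁻¹ = c * w * c⁻¹
    rw [hz, mul_inv_rev, mul_assoc c, hz2]
    group
  exact (Set.finite_range _).subset hsub

theorem Lam_sq {l : W} (hl : l ∈ D.Lam) (h : l * l = 1) : l = 1 := by
  have h1 : (⟨l, hl⟩ : D.Lam) * ⟨l, hl⟩ = 1 := Subtype.ext h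
  have h2 := congrArg D.freeIso h1
  rw [map_mul, map_one] at h2
  have h3 : Multiplicative.toAdd (D.freeIso ⟨l, hl⟩) = 0 := by
    have h4 := congrArg Multiplicative.toAdd h2
    rw [toAdd_mul, toAdd_one] at h4
    funext i
    have := congrFun h4 i
    simp only [Pi.add_apply, Pi.zero_apply] at this ⊢
    omega
  have h5 : D.freeIso ⟨l, hl⟩ = 1 := h3
  have h6 : (⟨l, hl⟩ : D.Lam) = 1 := by
    rw [← map_one D.freeIso] at h5
    exact D.freeIso.injective h5
  exact congrArg Subtype.val h6

theorem WJ_unique {a b : W} (ha : a ∈ D.WJ) (hb : b ∈ D.WJ) (h : a * b⁻¹ ∈ D.Lam) : a = b := by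
  obtain ⟨u, _, hu⟩ := D.hs0_hyper a
  have h1 : a = u := hu a ⟨ha, by rw [mul_inv_cancel]; exact one_mem _⟩
  have h2 : b = u := hu b ⟨hb, h⟩
  rw [h1, h2]

theorem s0_notMem : D.s0 ∉ D.WJ := by
  intro h
  have htop : Subgroup.closure (Set.range cs.simple \ {D.s0}) = ⊤ := by
    rw [eq_top_iff, ← cs.subgroup_closure_range_simple, Subgroup.closure_le]
    intro s hs
    by_cases hs0 : s = D.s0
    · rw [hs0]; exact h
    · exact Subgroup.subset_closure ⟨hs, hs0⟩
  have hfin := D.hWJ_fin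
  rw [htop, Subgroup.coe_top] at hfin
  have := D.infW
  exact Set.infinite_univ hfin

theorem wJ_sq : D.wJ * D.wJ = 1 := by
  have := D.hst_J 1 (one_mem _)
  rw [map_one, mul_one] at this
  exact this.symm

end Main

/-- Each double coset `W_J x W_J^◇` in `W` is stable under the
anti-involution `w ↦ ◇(w)⁻¹`.  In particular, the unique longest element of each
`(W_J, W_J^◇)`-double coset belongs to `I_◇`. -/
theorem dcoset_stable_under_dia (cs : CoxeterSystem M W) (D : AffineData cs)
    (s1 : W) (hs1_S : s1 ∈ Set.range cs.simple)
    (hs1_hyper : ∀ w : W, ∃! u : W,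
      u ∈ Subgroup.closure (Set.range cs.simple \ {s1}) ∧ w * u⁻¹ ∈ D.Lam)
    (dia : MulAut W) (hdia : D.InALamStar dia) (hdia_s0 : dia D.s0 = s1) :
    (∀ x y : W, y ∈ D.DCosetDia s1 x → (dia y)⁻¹ ∈ D.DCosetDia s1 x)
      ∧ ∀ x d : W, d ∈ D.DCosetDia s1 x →
          (∀ y ∈ D.DCosetDia s1 x, cs.length y ≤ cs.length d) → dia d = d⁻¹ := by
  obtain ⟨a, ⟨ha_S, w, hw, haw⟩, rfl⟩ := hdia
  set dia : MulAut W := a * D.st with hdia_def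
  set H' : Subgroup W := Subgroup.closure (Set.range cs.simple \ {s1}) with hH'
  have hcl : InvClosed cs D.WJ := invClosed_closure cs _ Set.sdiff_subset
  have hcl' : InvClosed cs H' := invClosed_closure cs _ Set.sdiff_subset
  have hwJ : D.wJ ∈ D.WJ := D.hwJ_mem
  -- the element `g`
  obtain ⟨g, hgdef⟩ : ∃ g, g = w * D.wJ := ⟨_, rfl⟩
  have hg : g ∈ D.WJ := hgdef ▸ mul_mem hw hwJ
  have hnorm := D.hLam_normal
  have hdL : ∀ l ∈ D.Lam, dia l = (g * l * g⁻¹)⁻¹ := by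
    intro l hl
    show a (D.st l) = _
    rw [D.hst_Lam l hl, haw _ (inv_mem (hnorm.conj_mem _ hl _)), hgdef]
    group
  -- `dia` permutes the simple reflections
  have hdS : ∀ s ∈ Set.range cs.simple, dia s ∈ Set.range cs.simple := by
    intro s hs
    show a (D.st s) ∈ _
    rw [← ha_S]
    exact Set.mem_image_of_mem _ (D.hst_S s hs)
  have hdS' : ∀ s ∈ Set.range cs.simple, dia.symm s ∈ Set.range cs.simple := by
    intro s hs
    have hs2 := hs
    rw [← ha_S] at hs2
    obtain ⟨r, hr, rfl⟩ := hs2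
    have : dia (D.st r) = a r := by
      show a (D.st (D.st r)) = a r
      rw [D.hst_inv]
    rw [← this, MulEquiv.symm_apply_apply]
    exact D.hst_S r hr
  have hlen : ∀ x, cs.length (dia x) = cs.length x := by
    intro x
    refine le_antisymm (len_aut_le cs dia (fun i => hdS _ ⟨i, rfl⟩) x) ?_
    have := len_aut_le cs dia.symm (fun i => hdS' _ ⟨i, rfl⟩) (dia x)
    rwa [MulEquiv.symm_apply_apply] at this
  have hdrefl : ∀ t, cs.IsReflection t → cs.IsReflection (dia t) := by
    rintro t ⟨x, i, rfl⟩
    obtain ⟨j, hj⟩ := hdS _ ⟨i, rfl⟩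
    rw [map_mul, map_mul, map_inv, ← hj]
    exact ⟨_, _, rfl⟩
  have hdJ : ∀ u ∈ D.WJ, dia u ∈ H' := by
    intro u hu
    induction hu using Subgroup.closure_induction with
    | mem s hs =>
      refine Subgroup.subset_closure ⟨hdS s hs.1, fun h => hs.2 ?_⟩
      have h2 : dia s = dia D.s0 := by rw [hdia_s0]; exact h
      exact dia.injective h2
    | one => rw [map_one]; exact one_mem _
    | mul x y _ _ hx hy => rw [map_mul]; exact mul_mem hx hy
    | inv x _ hx => rw [map_inv]; exact inv_mem hx
  have huniq' : ∀ p ∈ H', ∀ q ∈ H', p * q⁻¹ ∈ D.Lam → p = q := by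
    intro p hp q hq h
    obtain ⟨u, _, hu⟩ := hs1_hyper p
    have h1 : p = u := hu p ⟨hp, by rw [mul_inv_cancel]; exact one_mem _⟩
    have h2 : q = u := hu q ⟨hq, h⟩
    rw [h1, h2]
  -- `dia x ≡ g x g⁻¹` modulo `Λ`
  have hmod : ∀ x, dia x * (g * x * g⁻¹)⁻¹ ∈ D.Lam := by
    intro x
    have key : ∀ l ∈ D.Lam, dia x * (g * l * g⁻¹)⁻¹ * (dia x)⁻¹
        = (g * (x * l * x⁻¹) * g⁻¹)⁻¹ := by
      intro l hl
      rw [← hdL l hl, ← hdL _ (hnorm.conj_mem _ hl x), map_mul, map_mul, map_inv]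
    apply mem_Lam_of_comm
    intro m hm
    have hl : g⁻¹ * (g * x⁻¹ * g⁻¹ * m⁻¹ * (g * x⁻¹ * g⁻¹)⁻¹) * g ∈ D.Lam := by
      have h1 := hnorm.conj_mem _ (inv_mem hm) (g⁻¹ * (g * x⁻¹ * g⁻¹))
      convert h1 using 1
      group
    have h2 := key _ hl
    have e1 : (g * (g⁻¹ * (g * x⁻¹ * g⁻¹ * m⁻¹ * (g * x⁻¹ * g⁻¹)⁻¹) * g) * g⁻¹)⁻¹
        = (g * x * g⁻¹)⁻¹ * m * (g * x * g⁻¹) := by group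
    have e2 : (g * (x * (g⁻¹ * (g * x⁻¹ * g⁻¹ * m⁻¹ * (g * x⁻¹ * g⁻¹)⁻¹) * g) * x⁻¹) * g⁻¹)⁻¹
        = m := by group
    rw [e1, e2] at h2
    have e3 : dia x * (g * x * g⁻¹)⁻¹ * m * (dia x * (g * x * g⁻¹)⁻¹)⁻¹
        = dia x * ((g * x * g⁻¹)⁻¹ * m * (g * x * g⁻¹)) * (dia x)⁻¹ := by group
    exact e3.trans h2
  -- the key point: `g` lies in `W_J^◇`
  have hg' : g ∈ H' := by
    refine mem_of_inversions cs H' g fun t ht htg => ?_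
    by_contra htH'
    have htJ : t ∈ D.WJ := hcl g hg t htg
    obtain ⟨t1, ht1def⟩ : ∃ t1, t1 = g⁻¹ * t * g := ⟨_, rfl⟩
    have ht1 : t1 ∈ D.WJ := ht1def ▸ mul_mem (mul_mem (inv_mem hg) htJ) hg
    have ht1r : cs.IsReflection t1 := by
      have := ht.conj g⁻¹
      rwa [inv_inv, ← ht1def] at this
    obtain ⟨t', ht'def⟩ : ∃ t', t' = dia t1 := ⟨_, rfl⟩
    have ht'H : t' ∈ H' := ht'def ▸ hdJ t1 ht1
    have ht'r : cs.IsReflection t' := ht'def ▸ hdrefl t1 ht1r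
    obtain ⟨nu, hnudef⟩ : ∃ nu, nu = t' * t := ⟨_, rfl⟩
    have hnu : nu ∈ D.Lam := by
      have := hmod t1
      rw [← ht'def, ht1def] at this
      have e : (g * (g⁻¹ * t * g) * g⁻¹)⁻¹ = t := by
        have e0 : g * (g⁻¹ * t * g) * g⁻¹ = t := by group
        rw [e0, ht.inv]
      rw [e, ← hnudef] at this
      exact this
    have hne : t' ≠ t := fun h => htH' (h ▸ ht'H)
    have hzero : ∀ x : ZMod 2, x ≠ 1 → x = 0 := by decide
    have z1 : eta cs t t' = 0 := hzero _ fun h => htH' (hcl' t' ht'H t h)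
    have z2 : eta cs t' t = 0 := hzero _ fun h =>
      hne (WJ_unique D (hcl t htJ t' h) htJ (by rw [ht.inv, ← hnudef]; exact hnu))
    have hconj : t * nu * t = nu⁻¹ := by
      rw [hnudef, mul_inv_rev, ht.inv, ht'r.inv, mul_assoc, mul_assoc, ht.mul_self, mul_one]
    have z3 : eta cs (nu * t * nu⁻¹) g = 0 := hzero _ fun h => by
      have h1 := hcl g hg _ h
      have e : nu * t * nu⁻¹ * t⁻¹ = nu * nu := by
        rw [ht.inv, ← hconj]
        have := ht.mul_self
        calc nu * t * (t * nu * t) * t = nu * (t * t) * nu * (t * t) := by group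
          _ = nu * nu := by rw [this]; group
      have h2 := WJ_unique D h1 htJ (by rw [e]; exact mul_mem hnu hnu)
      have h3 : nu * nu = 1 := by rw [← e, h2, mul_inv_cancel]
      have h4 := Lam_sq D hnu h3
      rw [hnudef] at h4
      exact hne (by rw [← ht.inv]; exact eq_inv_of_mul_eq_one_left h4)
    have z4 : eta cs t' nu = 1 := by
      rw [hnudef, eta_mul, eta_self cs ht'r, ht'r.inv, mul_assoc, ht'r.mul_self, mul_one, z2,
        add_zero]
    have z5 : eta cs t nu⁻¹ = 1 := by
      rw [hnudef, mul_inv_rev, ht.inv, ht'r.inv, eta_mul, eta_self cs ht, ht.inv, mul_assoc,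
        ht.mul_self, mul_one, z1, add_zero]
    have hdl : dia (g⁻¹ * nu⁻¹ * g) = nu := by
      have hm := hnorm.conj_mem _ (inv_mem hnu) g⁻¹
      rw [inv_inv] at hm
      rw [hdL _ hm]
      group
    have z6 : eta cs t1 (g⁻¹ * nu⁻¹ * g) = 1 := by
      rw [← eta_aut cs dia hlen ht1r (hdrefl _ ht1r), hdl, ← ht'def, z4]
    have e7 : g * t1 * g⁻¹ = t := by rw [ht1def]; group
    have e8 : (g⁻¹ * nu⁻¹)⁻¹ * t1 * (g⁻¹ * nu⁻¹) = nu * t * nu⁻¹ := by rw [← e7]; group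
    have e9 : g⁻¹⁻¹ * t1 * g⁻¹ = t := by rw [inv_inv, e7]
    rw [eta_mul, eta_mul, e8, e9, eta_inv, e7, htg, z5, z3] at z6
    exact absurd z6 (by decide)
  -- `dia` exchanges `s0` and `s1`
  have hdK : ∀ u ∈ D.WJ, u ∈ H' → dia u = g * u * g⁻¹ := fun u hu hu' =>
    huniq' _ (hdJ u hu) _ (mul_mem (mul_mem hg' hu') (inv_mem hg')) (hmod u)
  have hKK : ∀ s ∈ Set.range cs.simple, s ≠ D.s0 → s ≠ s1 → dia s ≠ D.s0 := by
    intro s hs h0 h1 h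
    have hsJ : s ∈ D.WJ := Subgroup.subset_closure ⟨hs, h0⟩
    have hsH : s ∈ H' := Subgroup.subset_closure ⟨hs, h1⟩
    apply s0_notMem D
    rw [← h, hdK s hsJ hsH]
    exact mul_mem (mul_mem hg hsJ) (inv_mem hg)
  have hd1 : dia s1 = D.s0 := by
    have hr := hdS' _ D.hs0_S
    have hdr : dia (dia.symm D.s0) = D.s0 := MulEquiv.apply_symm_apply _ _
    by_cases h1 : dia.symm D.s0 = s1
    · rw [← h1, hdr]
    · by_cases h0 : dia.symm D.s0 = D.s0
      · rw [h0, hdia_s0] at hdr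
        calc dia s1 = dia D.s0 := by rw [hdr]
          _ = s1 := hdia_s0
          _ = D.s0 := hdr
      · exact absurd hdr (hKK _ hr h0 h1)
  have hdJ' : ∀ v ∈ H', dia v ∈ D.WJ := by
    intro u hu
    induction hu using Subgroup.closure_induction with
    | mem s hs =>
      refine Subgroup.subset_closure ⟨hdS s hs.1, fun h => hs.2 ?_⟩
      have h2 : dia s = dia s1 := by rw [hd1]; exact h
      exact dia.injective h2
    | one => rw [map_one]; exact one_mem _
    | mul x y _ _ hx hy => rw [map_mul]; exact mul_mem hx hy
    | inv x _ hx => rw [map_inv]; exact inv_mem hx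
  have part1 : ∀ x y : W, y ∈ D.DCosetDia s1 x → (dia y)⁻¹ ∈ D.DCosetDia s1 x := by
    rintro x y ⟨u, hu, v, hv, rfl⟩
    obtain ⟨p, ⟨hp, hl⟩, _⟩ := hs1_hyper x
    obtain ⟨l, hldef⟩ : ∃ l, l = x * p⁻¹ := ⟨_, rfl⟩
    rw [← hldef] at hl
    have hx : x = l * p := by rw [hldef]; group
    refine ⟨(dia v)⁻¹ * (dia p)⁻¹ * g, mul_mem (mul_mem (inv_mem (hdJ' v hv))
      (inv_mem (hdJ' p hp))) hg, p⁻¹ * g⁻¹ * (dia u)⁻¹, mul_mem (mul_mem (inv_mem hp)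
      (inv_mem hg')) (inv_mem (hdJ u hu)), ?_⟩
    rw [hx]
    simp only [map_mul]
    rw [hdL l hl]
    group
  refine ⟨part1, ?_⟩
  intro x d hd hmax
  have h1 := part1 x d hd
  obtain ⟨u, hu, v, hv, hduv⟩ := hd
  have hsub : ∀ p ∈ D.WJ, ∀ q ∈ H', cs.length (p * d * q) ≤ cs.length d := by
    intro p hp q hq
    refine hmax _ ⟨p * u, mul_mem hp hu, v * q, mul_mem hv hq, ?_⟩
    rw [hduv]; group
  obtain ⟨u2, hu2, v2, hv2, h2⟩ := h1
  have h3 : (dia d)⁻¹ = (u2 * u⁻¹) * d * (v⁻¹ * v2) := by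
    rw [h2]
    rw [hduv]
    group
  have h4 := dcoset_max_unique cs hcl hcl' d hsub _ _ (mul_mem hu2 (inv_mem hu))
    (mul_mem (inv_mem hv) hv2) (by rw [← h3, cs.length_inv, hlen])
  rw [← h3] at h4
  rw [← h4, inv_inv, h4]

end LY
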